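/- arXiv:math/0302181 — 2 statements merged into one kernel-verified Lean document; each statement's English description precedes it below -/
import Mathlib

section
/- Let (A, g) be the odometer built on a sequence (n_i)_{i ∈ ℕ} of positive integers with n_i dividing n_{i+1}. Then Φ(Per(A, g)) = Φ({n_i : i ∈ ℕ}). Moreover, if (W^(m_j))_{j ∈ ℕ} is a regular sequence of periodic partitions of (A, g) of lengths m_j, then the family of all sets W^(m_j)_r (j ∈ ℕ, 0 ≤ r ≤ m_j − 1) is a basis of the topology of A if and only if Φ({m_j : j ∈ ℕ}) = Φ(Per(A, g)). -/
/-!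
The `i`-th coordinate of the `N`-fold translate of `a` is `a i + N`, and the cylinders
`{b | b i = a i}` form a neighbourhood basis at `a`. Two consequences carry the proof.

* Each `n i` is a period, and each period divides some `n i`. The cylinders of level `i` form a
  periodic partition of length `n i`. Conversely, for a partition of length `m`, a cell containing
  `a` contains a cylinder at `a` of some level `i`, hence also the `n i`-th translate of `a`; but a
  translate by `N` stays in its cell only when `m ∣ N`.
* The cells of the partitions `W j` form a basis iff every `n i` divides some `m j`. If they do
  form a basis, a cell inside `{b | b i = 0}` is returned to by the `m j`-th translate, so
  `n i ∣ m j`. Conversely, when `n i ∣ m j`, each cell of `W j` lies inside one cylinder of level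
  `i`: some translate by `N` moves `b` arbitrarily close to another point `a` of its cell, so that
  `m j ∣ N`, whence `a` and `b` agree at level `i`.

Since `m` is a divisibility chain, every `n i` divides some `m j` as soon as the ultranatural number
of `m` dominates that of `n`.
-/

open Set Function

section Defs

variable {X : Type*} [TopologicalSpace X]

/-- A periodic partition of length `m` of the dynamical system given by `f : X → X`:
a family of clopen sets indexed by `ZMod m`, cyclically permuted by `f`,
pairwise disjoint, covering `X`. -/
def IsPeriodicPartition (f : X → X) (m : ℕ) (W : ZMod m → Set X) : Prop :=
  0 < m ∧ (∀ i, IsClopen (W i)) ∧ (∀ i, W (i + 1) = f '' W i) ∧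
    (Pairwise fun i j => Disjoint (W i) (W j)) ∧ (⋃ i, W i) = Set.univ

/-- The set of periods of a dynamical system. -/
def Periods (f : X → X) : Set ℕ :=
  {m | ∃ W : ZMod m → Set X, IsPeriodicPartition f m W}

/-- The set `A(k, l) = ⋃_{s=0}^{D-1} f^s (W₁ k ∩ W₂ l)`, `D = lcm m₁ m₂`. -/
def compatSet (f : X → X) {m₁ m₂ : ℕ} (W₁ : ZMod m₁ → Set X) (W₂ : ZMod m₂ → Set X)
    (k : ZMod m₁) (l : ZMod m₂) : Set X :=
  ⋃ s ∈ Finset.range (Nat.lcm m₁ m₂), f^[s] '' (W₁ k ∩ W₂ l)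

/-- Two periodic partitions are compatible if every `A(k, l)` is empty or all of `X`. -/
def Compatible (f : X → X) {m₁ m₂ : ℕ} (W₁ : ZMod m₁ → Set X) (W₂ : ZMod m₂ → Set X) : Prop :=
  ∀ k l, compatSet f W₁ W₂ k l = ∅ ∨ compatSet f W₁ W₂ k l = Set.univ

/-- Indecomposability of a dynamical system. -/
def Indecomposable (f : X → X) : Prop :=
  ∀ X₁ X₂ : Set X, IsClosed X₁ → IsClosed X₂ → f '' X₁ = X₁ → f '' X₂ = X₂ →
    Disjoint X₁ X₂ → X₁ ∪ X₂ = Set.univ → X₁ = ∅ ∨ X₂ = ∅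

end Defs

/-- Ultranatural numbers: a prime exponent in `ℕ ∪ {∞}` for every prime. -/
abbrev Ultranat := Nat.Primes → ℕ∞

/-- `Phi A` : the ultranatural number whose exponent at `p` is
`sup {k : p^k divides some element of A}`. -/
noncomputable def Phi (A : Set ℕ) : Ultranat :=
  fun p => ⨆ k ∈ {k : ℕ | ∃ a ∈ A, (p : ℕ) ^ k ∣ a}, (k : ℕ∞)

/-- `Phi0 n` : prime factorization of `n` as an ultranatural number. -/
noncomputable def Phi0 (n : ℕ) : Ultranat := Phi {n}

/-- A regular subset of the positive natural numbers: nonempty, closed under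
divisors and least common multiples. -/
def IsRegularSet (A : Set ℕ) : Prop :=
  A.Nonempty ∧ 0 ∉ A ∧ (∀ a ∈ A, ∀ d : ℕ, d ∣ a → d ∈ A) ∧
    ∀ a ∈ A, ∀ b ∈ A, Nat.lcm a b ∈ A

instance (m : ℕ) : TopologicalSpace (ZMod m) := ⊥
instance (m : ℕ) : DiscreteTopology (ZMod m) := ⟨rfl⟩

/-- The phase space of the odometer built on the sequence `n`: the inverse limit
of the cyclic groups `ZMod (n i)` along the reduction maps, topologized as a
subspace of the product of the discrete spaces `ZMod (n i)`. -/
abbrev OdometerCarrier (n : ℕ → ℕ) (hd : ∀ i, n i ∣ n (i + 1)) : Type :=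
  {a : ∀ i, ZMod (n i) // ∀ i, ZMod.castHom (hd i) (ZMod (n i)) (a (i + 1)) = a i}

/-- The odometer map: translation by `e = (1, 1, 1, …)`. -/
def odometerAdd (n : ℕ → ℕ) (hd : ∀ i, n i ∣ n (i + 1)) (a : OdometerCarrier n hd) :
    OdometerCarrier n hd :=
  ⟨fun i => a.1 i + 1, fun i => by simp [map_add, map_one, a.2 i]⟩

/-- Iterate of a bijection over an integer exponent. -/
def zIter {Y : Type*} (f : Equiv.Perm Y) (i : ℤ) : Y → Y := ⇑(f ^ i)

theorem Phi_mono {A B : Set ℕ} (h : ∀ a ∈ A, ∃ b ∈ B, a ∣ b) : Phi A ≤ Phi B := by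
  intro p
  refine iSup₂_le fun k hk => ?_
  obtain ⟨a, ha, hka⟩ := hk
  obtain ⟨b, hb, hab⟩ := h a ha
  exact le_iSup₂ (f := fun (k : ℕ) (_ : k ∈ {k : ℕ | ∃ a ∈ B, (p : ℕ) ^ k ∣ a}) => (k : ℕ∞)) k
    ⟨b, hb, hka.trans hab⟩

/-- A nonzero natural number lying below the ultranatural number of a divisibility chain divides
a term of the chain: each of its finitely many prime powers divides some term, hence all later
ones. -/
theorem exists_dvd_of_Phi_le {m : ℕ → ℕ} (hm : ∀ j, m j ∣ m (j + 1)) {N : ℕ} (hN : N ≠ 0)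
    (h : Phi {N} ≤ Phi (Set.range m)) : ∃ j, N ∣ m j := by
  have hmono : ∀ i j, i ≤ j → m i ∣ m j := fun i j hij =>
    Nat.le_induction (dvd_refl _) (fun k _ ih => ih.trans (hm k)) j hij
  have key : ∀ p : ℕ, p.Prime → ∃ j, p ^ N.factorization p ∣ m j := by
    intro p hp
    by_cases h0 : N.factorization p = 0
    · exact ⟨0, by simp [h0]⟩
    have h1 : (N.factorization p : ℕ∞) ≤ Phi (Set.range m) ⟨p, hp⟩ :=
      le_trans (le_iSup₂ (f := fun (k : ℕ)
        (_ : k ∈ {k : ℕ | ∃ a ∈ ({N} : Set ℕ), p ^ k ∣ a}) => (k : ℕ∞))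
        (N.factorization p) ⟨N, rfl, Nat.ordProj_dvd N p⟩) (h ⟨p, hp⟩)
    -- The supremum in `ℕ∞` exceeds the natural number `N.factorization p - 1`, so some
    -- exponent in the set reaches `N.factorization p`.
    have h2 : ((N.factorization p - 1 : ℕ) : ℕ∞) < Phi (Set.range m) ⟨p, hp⟩ :=
      lt_of_lt_of_le (by exact_mod_cast (by omega)) h1
    obtain ⟨k, hk⟩ := lt_iSup_iff.1 h2
    obtain ⟨⟨a, ⟨j, rfl⟩, hka⟩, hlt⟩ := lt_iSup_iff.1 hk
    have hlt' : N.factorization p - 1 < k := by exact_mod_cast hlt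
    exact ⟨j, (pow_dvd_pow p (by omega)).trans hka⟩
  choose! J hJ using key
  refine ⟨N.primeFactors.sup J, ?_⟩
  rw [Nat.dvd_iff_prime_pow_dvd_dvd]
  intro p k hp hk
  by_cases hpN : p ∈ N.primeFactors
  · exact ((pow_dvd_pow p ((hp.pow_dvd_iff_le_factorization hN).1 hk)).trans (hJ p hp)).trans
      (hmono _ _ (Finset.le_sup hpN))
  · have : N.factorization p = 0 := Finsupp.notMem_support_iff.1 hpN
    have : k = 0 := by
      have := (hp.pow_dvd_iff_le_factorization hN).1 hk
      omega
    simp [this]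

namespace IsPeriodicPartition

variable {X : Type*} [TopologicalSpace X] {f : X → X} {m : ℕ} {W : ZMod m → Set X}

theorem iterate_mem (h : IsPeriodicPartition f m W) {x : X} {r : ZMod m} (hx : x ∈ W r) (N : ℕ) :
    f^[N] x ∈ W (r + N) := by
  induction N with
  | zero => simpa using hx
  | succ N ih =>
    rw [Function.iterate_succ_apply', Nat.cast_succ, ← add_assoc, h.2.2.1]
    exact ⟨_, ih, rfl⟩

theorem iterate_mem_iff (h : IsPeriodicPartition f m W) {x : X} {r : ZMod m} (hx : x ∈ W r)
    (N : ℕ) : f^[N] x ∈ W r ↔ m ∣ N := by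
  constructor
  · intro h'
    rw [← ZMod.natCast_eq_zero_iff]
    by_contra hne
    have : r ≠ r + N := fun e => hne (by simpa using e.symm)
    exact Set.disjoint_left.1 (h.2.2.2.1 this) h' (h.iterate_mem hx N)
  · intro hd
    have := h.iterate_mem hx N
    rwa [(ZMod.natCast_eq_zero_iff N m).2 hd, add_zero] at this

theorem exists_mem (h : IsPeriodicPartition f m W) (x : X) : ∃ r, x ∈ W r := by
  have : x ∈ ⋃ i, W i := by rw [h.2.2.2.2]; trivial
  simpa using this

end IsPeriodicPartition

namespace OdometerCarrier

variable {n : ℕ → ℕ} {hd : ∀ i, n i ∣ n (i + 1)}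

theorem iterate_apply (a : OdometerCarrier n hd) (N i : ℕ) :
    ((odometerAdd n hd)^[N] a).1 i = a.1 i + N := by
  induction N with
  | zero => simp
  | succ N ih =>
    rw [Function.iterate_succ_apply']
    change ((odometerAdd n hd)^[N] a).1 i + 1 = _
    rw [ih]; push_cast; ring

theorem apply_eq_of_le {a b : OdometerCarrier n hd} {i j : ℕ} (hij : i ≤ j)
    (h : a.1 j = b.1 j) : a.1 i = b.1 i := by
  induction j, hij using Nat.le_induction with
  | base => exact h
  | succ k _ ih => exact ih (by rw [← a.2 k, ← b.2 k, h])

theorem isClopen_preimage (i : ℕ) (S : Set (ZMod (n i))) :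
    IsClopen {a : OdometerCarrier n hd | a.1 i ∈ S} :=
  (isClopen_discrete S).preimage ((continuous_apply i).comp continuous_subtype_val)

/-- The cylinders at `a` form a neighbourhood basis: a basic product neighbourhood constrains
finitely many coordinates, all of which are determined by the one of largest index. -/
theorem exists_cylinder_subset {U : Set (OdometerCarrier n hd)} (hU : IsOpen U)
    {a : OdometerCarrier n hd} (ha : a ∈ U) : ∃ i, ∀ b : OdometerCarrier n hd,
      b.1 i = a.1 i → b ∈ U := by
  obtain ⟨V, hV, rfl⟩ := isOpen_induced_iff.1 hU
  obtain ⟨I, u, hu, hsub⟩ := isOpen_pi_iff.1 hV a.1 ha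
  refine ⟨I.sup id, fun b hb => hsub fun k hk => ?_⟩
  have : b.1 k = a.1 k := apply_eq_of_le (Finset.le_sup (f := id) hk) hb
  rw [this]
  exact (hu k hk).2

theorem dvd_of_isPeriodicPartition {m : ℕ} {W : ZMod m → Set (OdometerCarrier n hd)}
    (h : IsPeriodicPartition (odometerAdd n hd) m W) : ∃ i, m ∣ n i := by
  let z : OdometerCarrier n hd := ⟨fun _ => 0, fun _ => map_zero _⟩
  obtain ⟨r, hr⟩ := h.exists_mem z
  obtain ⟨i, hi⟩ := exists_cylinder_subset (h.2.1 r).isOpen hr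
  exact ⟨i, (h.iterate_mem_iff hr _).1 (hi _ (by rw [iterate_apply]; simp))⟩

/-- The cylinders of level `i` form a periodic partition of length `n i`. -/
theorem isPeriodicPartition_cylinder (hpos : ∀ i, 0 < n i) (i : ℕ) :
    IsPeriodicPartition (odometerAdd n hd) (n i) fun r => {a | a.1 i = r} := by
  refine ⟨hpos i, fun r => isClopen_preimage i {r}, fun r => ?_, fun r s hrs => ?_, ?_⟩
  · ext a
    constructor
    · intro h
      refine ⟨⟨fun k => a.1 k - 1, fun k => ?_⟩, ?_, ?_⟩
      · rw [map_sub, map_one, a.2 k]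
      · change a.1 i - 1 = r
        rw [show a.1 i = r + 1 from h, add_sub_cancel_right]
      · exact Subtype.ext (funext fun k => sub_add_cancel _ _)
    · rintro ⟨b, hb, rfl⟩
      exact congrArg (· + 1) hb
  · exact Set.disjoint_left.2 fun a h1 h2 => hrs (h1.symm.trans h2)
  · exact Set.eq_univ_of_forall fun a => Set.mem_iUnion.2 ⟨a.1 i, rfl⟩

/-- When `n i ∣ m`, a cell of a periodic partition of length `m` lies in a single cylinder of
level `i`. -/
theorem apply_eq_of_mem {m : ℕ} {W : ZMod m → Set (OdometerCarrier n hd)}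
    (hpos : ∀ i, 0 < n i) (h : IsPeriodicPartition (odometerAdd n hd) m W) {i : ℕ} (hi : n i ∣ m)
    {r : ZMod m} {a b : OdometerCarrier n hd} (ha : a ∈ W r) (hb : b ∈ W r) :
    b.1 i = a.1 i := by
  obtain ⟨k, hk⟩ := exists_cylinder_subset (h.2.1 r).isOpen ha
  -- `N` translates `b` to a point agreeing with `a` at a level beyond both `k` and `i`.
  have : NeZero (n (max k i)) := ⟨(hpos _).ne'⟩
  set N := (a.1 (max k i) - b.1 (max k i)).val with hN
  have hfar : ((odometerAdd n hd)^[N] b).1 (max k i) = a.1 (max k i) := by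
    rw [iterate_apply, hN, ZMod.natCast_zmod_val, add_sub_cancel]
  have hmN : m ∣ N := (h.iterate_mem_iff hb N).1 (hk _ (apply_eq_of_le (le_max_left k i) hfar))
  have hnear := apply_eq_of_le (le_max_right k i) hfar
  rwa [iterate_apply, (ZMod.natCast_eq_zero_iff N (n i)).2 (hi.trans hmN), add_zero] at hnear

theorem Phi_periods (hpos : ∀ i, 0 < n i) :
    Phi (Periods (odometerAdd n hd)) = Phi (Set.range n) := by
  apply le_antisymm
  · refine Phi_mono fun m hm => ?_
    obtain ⟨W, hW⟩ := hm
    obtain ⟨i, hi⟩ := dvd_of_isPeriodicPartition hW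
    exact ⟨n i, ⟨i, rfl⟩, hi⟩
  · refine Phi_mono ?_
    rintro _ ⟨i, rfl⟩
    exact ⟨n i, ⟨_, isPeriodicPartition_cylinder hpos i⟩, dvd_rfl⟩

end OdometerCarrier

/-- for the odometer `(A, g)` built on `(n_i)` one has
`Phi (Per (A, g)) = Phi {n_i}`; moreover, for a regular sequence of periodic
partitions `(W^(m_j))` of `(A, g)`, the family of all its elements is a basis of
the topology of `A` iff `Phi {m_j} = Phi (Per (A, g))`. -/
theorem stmt12 (n : ℕ → ℕ) (hpos : ∀ i, 0 < n i) (hd : ∀ i, n i ∣ n (i + 1)) :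
    Phi (Periods (odometerAdd n hd)) = Phi (Set.range n) ∧
    ∀ (m : ℕ → ℕ) (W : ∀ j : ℕ, ZMod (m j) → Set (OdometerCarrier n hd)),
      (∀ j, IsPeriodicPartition (odometerAdd n hd) (m j) (W j)) →
      (∀ j, m j ∣ m (j + 1)) →
      (∀ j, Compatible (odometerAdd n hd) (W j) (W (j + 1))) →
      (TopologicalSpace.IsTopologicalBasis
          {S : Set (OdometerCarrier n hd) | ∃ j r, S = W j r} ↔
        Phi (Set.range m) = Phi (Periods (odometerAdd n hd))) := by
  refine ⟨OdometerCarrier.Phi_periods hpos, fun m W hW hm _ => ⟨fun hB => ?_, fun hPhi => ?_⟩⟩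
  · apply le_antisymm
    · refine Phi_mono ?_
      rintro _ ⟨j, rfl⟩
      exact ⟨m j, ⟨W j, hW j⟩, dvd_rfl⟩
    · rw [OdometerCarrier.Phi_periods hpos]
      refine Phi_mono ?_
      rintro _ ⟨i, rfl⟩
      let z : OdometerCarrier n hd := ⟨fun _ => 0, fun _ => map_zero _⟩
      obtain ⟨_, ⟨j, r, rfl⟩, hz, hsub⟩ := hB.exists_subset_of_mem_open (a := z)
        (show z ∈ {a : OdometerCarrier n hd | a.1 i ∈ ({0} : Set (ZMod (n i)))} from rfl)
        (OdometerCarrier.isClopen_preimage i {0}).isOpen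
      have h0 : ((odometerAdd n hd)^[m j] z).1 i = 0 :=
        hsub (((hW j).iterate_mem_iff hz (m j)).2 dvd_rfl)
      rw [OdometerCarrier.iterate_apply, show z.1 i = 0 from rfl, zero_add,
        ZMod.natCast_eq_zero_iff] at h0
      exact ⟨m j, ⟨j, rfl⟩, h0⟩
  · rw [OdometerCarrier.Phi_periods hpos] at hPhi
    refine TopologicalSpace.isTopologicalBasis_of_isOpen_of_nhds ?_ fun a U ha hU => ?_
    · rintro _ ⟨j, r, rfl⟩
      exact ((hW j).2.1 r).isOpen
    · obtain ⟨i, hi⟩ := OdometerCarrier.exists_cylinder_subset hU ha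
      obtain ⟨j, hj⟩ : ∃ j, n i ∣ m j := by
        refine exists_dvd_of_Phi_le hm (hpos i).ne' ?_
        rw [hPhi]
        refine Phi_mono ?_
        rintro _ rfl
        exact ⟨n i, ⟨i, rfl⟩, dvd_rfl⟩
      obtain ⟨r, hr⟩ := (hW j).exists_mem a
      exact ⟨W j r, ⟨j, r, rfl⟩, hr, fun b hb =>
        hi b (OdometerCarrier.apply_eq_of_mem hpos (hW j) hj hr hb)⟩
end

section
/- Let (X, f) be a dynamical system, let h : (X, f) → (A, g) be a projection onto an odometer (A, g), and let N ∈ Σ satisfy Φ(Per(A, g)) ≤ N ≤ Φ(Per(X, f)). Then there exist an odometer (A1, g1) with Φ(Per(A1, g1)) = N, a projection h1 : (X, f) → (A1, g1), and a morphism ψ : (A1, g1) → (A, g) such that h = ψ ∘ h1. -/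
/-!
A periodic partition of length `m` is the same thing as a continuous "clock" `v : X → ℤ` with
`v (f x) ≡ v x + 1` modulo `m` (`mem_Periods_iff`). The difference of two clocks is `f`-invariant
modulo the gcd of their moduli. This has two consequences: two clocks that agree modulo
`gcd a b` glue to a clock modulo `lcm a b` (`IsClock.glue`), and a clock modulo `k` can be lifted to
any multiple of `k` for which some clock exists (`IsClock.lift`). In particular the
periods of `(X, f)` are closed under divisors and least common multiples, so every `m` whose
prime powers obey the bound `N ≤ Phi (Periods f)` is the modulus of a clock
(`exists_isClock_of_bounded`).

Let `S` be the set of positive integers whose prime powers are bounded by `N`, and let `M i` be the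
lcm of the elements of `S` up to `i`. The odometer on `M` has `Phi = N`, because each of its
periods divides some `M i` (`dvd_of_isClock_odometer`). The projection `h` amounts to a coherent
family of clocks modulo the `n j`. Clocks `u i` modulo `M i` are built recursively so that
`u (i + 1)` lifts `u i` and `u i` agrees with the `j`-th clock of `h` modulo every common divisor of
`M i` and `n j` (`exists_step`). The recursion works because the divisors `gcd (M i) (n j)` of `M i`
stabilize as `j` grows. The clocks `u i` form `h₁`; it is surjective because its image is compact and
contains a dense orbit. Every `n j` lies in `S`, hence divides some `M i`, and `ψ` is reduction from
`M i` to `n j`.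
-/

open Set Function

/-- A clock modulo `m` for `f`: a continuous integer-valued function that advances by `1`
modulo `m` along `f`. It encodes a continuous equivariant map to `ZMod m`, with an arbitrary choice
of integer representatives. -/
def IsClock {X : Type*} [TopologicalSpace X] (f : X → X) (m : ℕ) (v : X → ℤ) : Prop :=
  Continuous v ∧ ∀ x, v (f x) ≡ v x + 1 [ZMOD m]

/-! ### Clocks -/

section Clock

variable {X : Type*} [TopologicalSpace X] {f : X → X}

lemma IsClock.of_dvd {m d : ℕ} {v : X → ℤ} (hv : IsClock f m v) (h : d ∣ m) :
    IsClock f d v :=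
  ⟨hv.1, fun x => (hv.2 x).of_dvd (Int.natCast_dvd_natCast.2 h)⟩

lemma isClock_one : IsClock f 1 (fun _ => 0) :=
  ⟨continuous_const, fun x => by simpa using Int.modEq_one⟩

lemma IsClock.iterate {m : ℕ} {v : X → ℤ} (hv : IsClock f m v) (k : ℕ) (x : X) :
    v (f^[k] x) ≡ v x + k [ZMOD m] := by
  induction k with
  | zero => simp
  | succ k ih =>
    rw [Function.iterate_succ_apply']
    refine (hv.2 _).trans ?_
    push_cast
    rw [← add_assoc]
    exact ih.add_right 1

/-- The difference of two clocks is `f`-invariant modulo every common divisor of their moduli. -/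
lemma IsClock.sub_emod {a b k : ℕ} {u v : X → ℤ} (hu : IsClock f a u) (hv : IsClock f b v)
    (ha : k ∣ a) (hb : k ∣ b) (x : X) :
    (u (f x) - v (f x)) % (k : ℤ) = (u x - v x) % (k : ℤ) := by
  have h := ((hu.of_dvd ha).2 x).sub ((hv.of_dvd hb).2 x)
  rw [add_sub_add_right_eq_sub] at h
  exact h

/-- If some clock modulo `m` exists, a clock modulo a divisor `k` of `m` lifts to one modulo `m`:
the existing clock is corrected by an invariant function. -/
lemma IsClock.lift {k m : ℕ} {u v : X → ℤ} (hu : IsClock f k u) (hv : IsClock f m v)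
    (hkm : k ∣ m) : ∃ w, IsClock f m w ∧ ∀ x, w x ≡ u x [ZMOD k] := by
  refine ⟨fun x => v x + (u x - v x) % (k : ℤ), ⟨?_, fun x => ?_⟩, fun x => ?_⟩
  · exact hv.1.add ((continuous_of_discreteTopology (f := fun z : ℤ => z % (k : ℤ))).comp
      (hu.1.sub hv.1))
  · simp only [hu.sub_emod hv dvd_rfl hkm x]
    rw [add_right_comm]
    exact (hv.2 x).add_right _
  · have := (Int.mod_modEq (u x - v x) k).add_left (v x)
    simpa using this

/-- Chinese remainder theorem for clocks. -/
lemma IsClock.glue {a b : ℕ} {u v : X → ℤ} (hu : IsClock f a u) (hv : IsClock f b v)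
    (h : ∀ x, u x ≡ v x [ZMOD (Nat.gcd a b : ℕ)]) :
    ∃ w, IsClock f (Nat.lcm a b) w ∧ (∀ x, w x ≡ u x [ZMOD a]) ∧ ∀ x, w x ≡ v x [ZMOD b] := by
  set w : X → ℤ := fun x => u x + a * (Nat.gcdA a b * ((v x - u x) / (Nat.gcd a b : ℕ))) with hw
  have hwa : ∀ x, w x ≡ u x [ZMOD a] := fun x => by
    rw [Int.modEq_iff_dvd]
    exact ⟨-(Nat.gcdA a b * ((v x - u x) / (Nat.gcd a b : ℕ))), by simp only [hw]; ring⟩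
  have hwb : ∀ x, w x ≡ v x [ZMOD b] := fun x => by
    obtain ⟨t, ht⟩ := (Int.modEq_iff_dvd.1 (h x))
    by_cases hg : ((Nat.gcd a b : ℕ) : ℤ) = 0
    · have : v x = u x := by rw [hg] at ht; linarith
      simp [hw, this, Int.ModEq]
    · rw [Int.modEq_iff_dvd]
      -- Bézout: `gcd a b * t - a * gcdA a b * t = b * gcdB a b * t`
      refine ⟨Nat.gcdB a b * t, ?_⟩
      have hq : (v x - u x) / ((Nat.gcd a b : ℕ) : ℤ) = t := by
        rw [ht, Int.mul_ediv_cancel_left _ hg]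
      simp only [hw, hq]
      have hb := Nat.gcd_eq_gcd_ab a b
      rw [hb] at ht
      linear_combination ht
  refine ⟨w, ⟨?_, fun x => ?_⟩, hwa, hwb⟩
  · exact hu.1.add ((continuous_of_discreteTopology (f := fun z : ℤ =>
      (a : ℤ) * (Nat.gcdA a b * (z / (Nat.gcd a b : ℕ))))).comp (hv.1.sub hu.1))
  · have h1 : w (f x) ≡ w x + 1 [ZMOD a] :=
      ((hwa _).trans (hu.2 x)).trans ((hwa x).symm.add_right 1)
    have h2 : w (f x) ≡ w x + 1 [ZMOD b] :=
      ((hwb _).trans (hv.2 x)).trans ((hwb x).symm.add_right 1)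
    rw [Int.modEq_iff_dvd] at h1 h2 ⊢
    have := Int.coe_lcm_dvd h1 h2
    simpa [Int.lcm] using this

lemma exists_isClock_lcm {a b : ℕ} (ha : ∃ v, IsClock f a v) (hb : ∃ v, IsClock f b v) :
    ∃ v, IsClock f (Nat.lcm a b) v := by
  obtain ⟨u, hu⟩ := ha
  obtain ⟨v, hv⟩ := hb
  obtain ⟨v', hv', h⟩ := (hu.of_dvd (Nat.gcd_dvd_left a b)).lift hv (Nat.gcd_dvd_right a b)
  obtain ⟨w, hw, -⟩ := hu.glue hv' fun x => (h x).symm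
  exact ⟨w, hw⟩

lemma exists_isClock_of_mem_Periods {m : ℕ} (h : m ∈ Periods f) : ∃ v, IsClock f m v := by
  obtain ⟨W, -, hcl, hsucc, hdis, hcov⟩ := h
  have hex : ∀ x, ∃ i, x ∈ W i := fun x => by
    simpa using (hcov ▸ Set.mem_univ x : x ∈ ⋃ i, W i)
  choose c hc using hex
  have huniq : ∀ x i, x ∈ W i → c x = i := fun x i hx => by
    by_contra hne
    exact Set.disjoint_left.1 (hdis hne) (hc x) hx
  have hcont : Continuous c := by
    rw [continuous_discrete_rng]
    intro i
    convert (hcl i).isOpen using 1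
    ext x
    exact ⟨fun hx => by rw [← show c x = i from hx]; exact hc x, huniq x i⟩
  refine ⟨fun x => (c x).cast, (continuous_of_discreteTopology
    (f := fun z : ZMod m => (z.cast : ℤ))).comp hcont, fun x => ?_⟩
  rw [← ZMod.intCast_eq_intCast_iff]
  have : c (f x) = c x + 1 := huniq _ _ (by rw [hsucc]; exact ⟨x, hc x, rfl⟩)
  simp [this]

lemma mem_Periods_iff (hf : Function.Surjective f) {m : ℕ} :
    m ∈ Periods f ↔ 0 < m ∧ ∃ v, IsClock f m v := by
  refine ⟨fun h => ⟨h.choose_spec.1, exists_isClock_of_mem_Periods h⟩, ?_⟩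
  rintro ⟨hm, v, hv, hvf⟩
  have hstep : ∀ x, ((v (f x) : ℤ) : ZMod m) = (v x : ZMod m) + 1 := fun x => by
    have := (ZMod.intCast_eq_intCast_iff _ _ _).2 (hvf x)
    simpa using this
  have hc : Continuous fun x => ((v x : ℤ) : ZMod m) :=
    (continuous_of_discreteTopology (f := fun z : ℤ => (z : ZMod m))).comp hv
  refine ⟨fun i => {x | ((v x : ℤ) : ZMod m) = i}, hm, fun i => ?_, fun i => ?_, ?_, ?_⟩
  · exact (isClopen_discrete ({i} : Set (ZMod m))).preimage hc
  · ext y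
    constructor
    · intro hy
      obtain ⟨x, rfl⟩ := hf y
      refine ⟨x, ?_, rfl⟩
      have hy' : ((v (f x) : ℤ) : ZMod m) = i + 1 := hy
      rw [hstep] at hy'
      exact add_right_cancel hy'
    · rintro ⟨x, hx, rfl⟩
      have hx' : ((v x : ℤ) : ZMod m) = i := hx
      simp [hstep, hx']
  · intro i j hij
    rw [Set.disjoint_left]
    intro x hx hx'
    exact hij (hx.symm.trans hx')
  · ext x
    simp

end Clock

/-! ### Integers bounded by an ultranatural number -/

lemma le_Phi {A : Set ℕ} {a : ℕ} (ha : a ∈ A) (p : Nat.Primes) {k : ℕ} (h : (p : ℕ) ^ k ∣ a) :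
    (k : ℕ∞) ≤ Phi A p :=
  le_iSup₂_of_le (f := fun (k : ℕ) (_ : k ∈ {k : ℕ | ∃ a ∈ A, (p : ℕ) ^ k ∣ a}) => (k : ℕ∞))
    k ⟨a, ha, h⟩ le_rfl

/-- The exponent `k` has to be positive: for `A = ∅` one has `Phi A = 0`. -/
lemma exists_pow_dvd_of_le_Phi {A : Set ℕ} (p : Nat.Primes) {k : ℕ} (hk : 0 < k)
    (h : (k : ℕ∞) ≤ Phi A p) : ∃ a ∈ A, (p : ℕ) ^ k ∣ a := by
  have hlt : ((k - 1 : ℕ) : ℕ∞) < Phi A p :=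
    lt_of_lt_of_le (by exact_mod_cast Nat.sub_lt hk one_pos) h
  unfold Phi at hlt
  simp only [lt_iSup_iff] at hlt
  obtain ⟨l, ⟨a, ha, hla⟩, hl⟩ := hlt
  have : k - 1 < l := by exact_mod_cast hl
  exact ⟨a, ha, (pow_dvd_pow _ (by omega)).trans hla⟩

/-- Positive integers all of whose prime-power divisors are bounded by `N`. -/
def boundedBy (N : Ultranat) : Set ℕ :=
  {m | 0 < m ∧ ∀ (p : Nat.Primes) (k : ℕ), (p : ℕ) ^ k ∣ m → (k : ℕ∞) ≤ N p}

lemma lcm_mem_boundedBy {N : Ultranat} {a b : ℕ} (ha : a ∈ boundedBy N) (hb : b ∈ boundedBy N) :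
    Nat.lcm a b ∈ boundedBy N := by
  refine ⟨Nat.lcm_pos ha.1 hb.1, fun p k hk => ?_⟩
  have hl := (Nat.lcm_pos ha.1 hb.1).ne'
  rw [p.2.pow_dvd_iff_le_factorization hl, Nat.factorization_lcm ha.1.ne' hb.1.ne',
    Finsupp.sup_apply, le_sup_iff] at hk
  rcases hk with hk | hk
  · exact ha.2 p k ((p.2.pow_dvd_iff_le_factorization ha.1.ne').2 hk)
  · exact hb.2 p k ((p.2.pow_dvd_iff_le_factorization hb.1.ne').2 hk)

lemma pow_mem_boundedBy {N : Ultranat} (p : Nat.Primes) {k : ℕ} (hk : (k : ℕ∞) ≤ N p) :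
    (p : ℕ) ^ k ∈ boundedBy N := by
  refine ⟨pow_pos p.2.pos k, fun q l hl => ?_⟩
  rcases Nat.eq_zero_or_pos l with rfl | hl0
  · simp
  · have hqp : (q : ℕ) = p := (Nat.prime_dvd_prime_iff_eq q.2 p.2).1
      (q.2.dvd_of_dvd_pow ((dvd_pow_self _ hl0.ne').trans hl))
    obtain rfl : q = p := Subtype.ext hqp
    exact le_trans (by exact_mod_cast (Nat.pow_dvd_pow_iff_le_right q.2.one_lt).1 hl) hk

lemma exists_isClock_of_bounded {X : Type*} [TopologicalSpace X] {f : X → X} {N : Ultranat}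
    (hN : N ≤ Phi (Periods f)) {m : ℕ} (hm : m ∈ boundedBy N) : ∃ v, IsClock f m v := by
  induction m using Nat.recOnPosPrimePosCoprime with
  | prime_pow p k hp hk =>
    obtain ⟨a, ha, hd⟩ := exists_pow_dvd_of_le_Phi ⟨p, hp⟩ hk
      ((hm.2 ⟨p, hp⟩ k dvd_rfl).trans (hN _))
    obtain ⟨v, hv⟩ := exists_isClock_of_mem_Periods ha
    exact ⟨v, hv.of_dvd hd⟩
  | zero => exact absurd hm.1 (lt_irrefl 0)
  | one => exact ⟨_, isClock_one⟩
  | coprime a b ha hb hab iha ihb =>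
    rw [← hab.lcm_eq_mul]
    exact exists_isClock_lcm
      (iha ⟨by omega, fun p k h => hm.2 p k (h.mul_right b)⟩)
      (ihb ⟨by omega, fun p k h => hm.2 p k (h.mul_left a)⟩)

open Classical in
/-- The least common multiple of the elements of `boundedBy N` that are at most `i`. -/
noncomputable def scale (N : Ultranat) (i : ℕ) : ℕ :=
  ((Finset.range (i + 1)).filter (· ∈ boundedBy N)).lcm id

lemma scale_mem (N : Ultranat) (i : ℕ) : scale N i ∈ boundedBy N := by
  classical
  have key : ∀ s : Finset ℕ, (∀ m ∈ s, m ∈ boundedBy N) → s.lcm id ∈ boundedBy N := by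
    intro s
    induction s using Finset.induction_on with
    | empty => exact fun _ => by simpa using pow_mem_boundedBy (N := N) ⟨2, Nat.prime_two⟩ (k := 0)
    | insert a s _ ih =>
      intro h
      rw [Finset.lcm_insert]
      exact lcm_mem_boundedBy (h a (Finset.mem_insert_self a s))
        (ih fun m hm => h m (Finset.mem_insert_of_mem hm))
  exact key _ fun m hm => (Finset.mem_filter.1 hm).2

lemma dvd_scale {N : Ultranat} {m i : ℕ} (hm : m ∈ boundedBy N) (hi : m ≤ i) :
    m ∣ scale N i := by
  classical
  exact Finset.dvd_lcm (f := id) (Finset.mem_filter.2 ⟨Finset.mem_range.2 (by omega), hm⟩)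

lemma scale_dvd (N : Ultranat) {i j : ℕ} (hij : i ≤ j) : scale N i ∣ scale N j := by
  classical
  refine Finset.lcm_dvd fun m hm => ?_
  rw [Finset.mem_filter, Finset.mem_range] at hm
  exact dvd_scale hm.2 (by simp only [id]; omega)

/-! ### Odometers -/

section Odometer

variable {n : ℕ → ℕ} {hd : ∀ i, n i ∣ n (i + 1)}

lemma dvd_of_le (hd : ∀ i, n i ∣ n (i + 1)) {i j : ℕ} (h : i ≤ j) : n i ∣ n j := by
  induction j, h using Nat.le_induction with
  | base => exact dvd_rfl
  | succ j _ ih => exact ih.trans (hd j)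

lemma castHom_coord (a : OdometerCarrier n hd) {i j : ℕ} (h : i ≤ j) :
    ZMod.castHom (dvd_of_le hd h) (ZMod (n i)) (a.1 j) = a.1 i := by
  induction j, h using Nat.le_induction with
  | base => simp
  | succ j hij ih =>
    rw [← ih, ← a.2 j]
    exact (RingHom.congr_fun (Subsingleton.elim
      ((ZMod.castHom (dvd_of_le hd hij) (ZMod (n i))).comp (ZMod.castHom (hd j) (ZMod (n j))))
      (ZMod.castHom (dvd_of_le hd (hij.trans j.le_succ)) (ZMod (n i)))) _).symm

lemma odometerAdd_surjective : Function.Surjective (odometerAdd n hd) := fun a =>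
  ⟨⟨fun i => a.1 i - 1, fun i => by rw [map_sub, map_one, a.2 i]⟩,
    Subtype.ext (funext fun i => sub_add_cancel _ _)⟩

lemma odometerAdd_iterate (k : ℕ) (a : OdometerCarrier n hd) (i : ℕ) :
    ((odometerAdd n hd)^[k] a).1 i = a.1 i + k := by
  induction k with
  | zero => simp
  | succ k ih =>
    rw [Function.iterate_succ_apply']
    simp [odometerAdd, ih, add_assoc]

/-- A sequence that agrees with `a` in coordinate `i` at time `i` converges to `a`. -/
lemma tendsto_odometer (a : OdometerCarrier n hd) (b : ℕ → OdometerCarrier n hd)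
    (h : ∀ i, (b i).1 i = a.1 i) : Filter.Tendsto b Filter.atTop (nhds a) := by
  rw [tendsto_subtype_rng, tendsto_pi_nhds]
  intro j
  refine tendsto_const_nhds.congr' ?_
  filter_upwards [Filter.eventually_ge_atTop j] with i hi
  rw [← castHom_coord (b i) hi, h i, castHom_coord a hi]

lemma isClock_coord (j : ℕ) :
    IsClock (odometerAdd n hd) (n j) (fun a => ((a.1 j).cast : ℤ)) := by
  refine ⟨(continuous_of_discreteTopology (f := fun z : ZMod (n j) => (z.cast : ℤ))).comp
    ((continuous_apply j).comp continuous_subtype_val), fun a => ?_⟩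
  rw [← ZMod.intCast_eq_intCast_iff]
  simp [odometerAdd]

lemma mem_Periods_odometer (hpos : ∀ i, 0 < n i) (j : ℕ) : n j ∈ Periods (odometerAdd n hd) :=
  (mem_Periods_iff odometerAdd_surjective).2 ⟨hpos j, _, isClock_coord j⟩

/-- Since `n i` steps of the odometer return close to the starting point, a clock, being locally
constant, takes the same value after `n i` steps once `i` is large. -/
lemma dvd_of_isClock_odometer {m : ℕ} {v : OdometerCarrier n hd → ℤ}
    (hv : IsClock (odometerAdd n hd) m v) : ∃ i, m ∣ n i := by
  let z : OdometerCarrier n hd := ⟨fun _ => 0, fun i => map_zero _⟩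
  have ht : Filter.Tendsto (fun i => (odometerAdd n hd)^[n i] z) Filter.atTop (nhds z) :=
    tendsto_odometer z _ fun i => by rw [odometerAdd_iterate]; simp
  have h2 := (hv.1.tendsto z).comp ht
  rw [nhds_discrete, Filter.tendsto_pure] at h2
  obtain ⟨i, hi⟩ := h2.exists
  refine ⟨i, ?_⟩
  have := hv.iterate (n i) z
  simp only [Function.comp] at hi
  rw [hi, Int.modEq_iff_dvd, add_sub_cancel_left] at this
  exact_mod_cast this

lemma Phi_odometer_scale (N : Ultranat) :
    Phi (Periods (odometerAdd (scale N) fun i => scale_dvd N i.le_succ)) = N := by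
  funext p
  apply le_antisymm
  · refine iSup₂_le fun k hk => ?_
    obtain ⟨a, ha, hka⟩ := hk
    obtain ⟨v, hv⟩ := exists_isClock_of_mem_Periods ha
    obtain ⟨i, hi⟩ := dvd_of_isClock_odometer hv
    exact (scale_mem N i).2 p k (hka.trans hi)
  · refine ENat.forall_natCast_le_iff_le.1 fun k hk => ?_
    exact le_Phi (mem_Periods_odometer (fun i => (scale_mem N i).1) _) p
      (dvd_scale (pow_mem_boundedBy p hk) le_rfl)

/-- An equivariant continuous map from a nonempty compact system to an odometer is onto: its image
is closed and contains a dense orbit. -/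
lemma surjective_of_equivariant {X : Type*} [TopologicalSpace X] [CompactSpace X] [Nonempty X]
    {f : X → X} (hpos : ∀ i, 0 < n i) {h : X → OdometerCarrier n hd} (hc : Continuous h)
    (he : ∀ x, h (f x) = odometerAdd n hd (h x)) : Function.Surjective h := by
  intro a
  obtain ⟨x⟩ := ‹Nonempty X›
  have hit : ∀ k, h (f^[k] x) = (odometerAdd n hd)^[k] (h x) := fun k =>
    (Function.Semiconj.iterate_right (f := h) (ga := f) (gb := odometerAdd n hd) he k) x
  have hcl : IsClosed (Set.range h) := (isCompact_range hc).isClosed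
  refine hcl.mem_of_tendsto (tendsto_odometer a
    (fun i => h (f^[(a.1 i - (h x).1 i).val] x)) fun i => ?_)
    (Filter.Eventually.of_forall fun i => Set.mem_range_self _)
  have : NeZero (n i) := ⟨(hpos i).ne'⟩
  rw [hit, odometerAdd_iterate, ZMod.natCast_zmod_val]
  ring

end Odometer

/-! ### Lifting clocks adapted to a projection -/

/-- The divisors `gcd M (n j)` of `M` stabilize. -/
lemma exists_gcd_stable {n : ℕ → ℕ} (hd : ∀ i, n i ∣ n (i + 1)) {M : ℕ} (hM : 0 < M) :
    ∃ J, ∀ j, Nat.gcd M (n j) ∣ Nat.gcd M (n J) := by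
  have hb : BddAbove (Set.range fun j => Nat.gcd M (n j)) :=
    ⟨M, by rintro _ ⟨j, rfl⟩; exact Nat.gcd_le_left _ hM⟩
  obtain ⟨J, hJ⟩ := Nat.sSup_mem (Set.range_nonempty fun j => Nat.gcd M (n j)) hb
  refine ⟨J, fun j => ?_⟩
  have h1 : Nat.gcd M (n (max j J)) ≤ Nat.gcd M (n J) := by
    have := le_csSup hb (Set.mem_range_self (max j J))
    exact this.trans_eq hJ.symm
  have h2 : Nat.gcd M (n J) ∣ Nat.gcd M (n (max j J)) :=
    Nat.gcd_dvd_gcd_of_dvd_right M (dvd_of_le hd (le_max_right _ _))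
  have h3 := Nat.le_antisymm h1 (Nat.le_of_dvd (Nat.gcd_pos_of_pos_left _ hM) h2)
  rw [← h3]
  exact Nat.gcd_dvd_gcd_of_dvd_right M (dvd_of_le hd (le_max_left _ _))

/-- `u` is a clock modulo `M` that agrees with the clock `H j` modulo each common divisor of `M`
and `n j`. -/
def Adapted {X : Type*} [TopologicalSpace X] (f : X → X) (n : ℕ → ℕ) (H : ℕ → X → ℤ) (M : ℕ)
    (u : X → ℤ) : Prop :=
  IsClock f M u ∧ ∀ j d : ℕ, d ∣ M → d ∣ n j → ∀ x, u x ≡ H j x [ZMOD d]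

/-- An adapted clock modulo `M` lifts to an adapted clock modulo any multiple `M'` of `M` that is
the modulus of some clock. -/
lemma exists_step {X : Type*} [TopologicalSpace X] {f : X → X} {n : ℕ → ℕ}
    (hd : ∀ i, n i ∣ n (i + 1)) {H : ℕ → X → ℤ} (hH : ∀ j, IsClock f (n j) (H j))
    (hHH : ∀ i j, i ≤ j → ∀ x, H j x ≡ H i x [ZMOD n i]) {M M' : ℕ} (hM' : 0 < M')
    (hMM : M ∣ M') (hv : ∃ v, IsClock f M' v) {u : X → ℤ} (hu : Adapted f n H M u) :
    ∃ u', Adapted f n H M' u' ∧ ∀ x, u' x ≡ u x [ZMOD M] := by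
  obtain ⟨v, hv⟩ := hv
  obtain ⟨J, hJ⟩ := exists_gcd_stable hd hM'
  have hDM : Nat.gcd M' (n J) ∣ M' := Nat.gcd_dvd_left _ _
  have hDn : Nat.gcd M' (n J) ∣ n J := Nat.gcd_dvd_right _ _
  obtain ⟨w, hw, hwu, hwH⟩ := hu.1.glue ((hH J).of_dvd hDn)
    (hu.2 J _ (Nat.gcd_dvd_left _ _) ((Nat.gcd_dvd_right _ _).trans hDn))
  obtain ⟨u', hu', hu'w⟩ := hw.lift hv (Nat.lcm_dvd hMM hDM)
  refine ⟨u', ⟨hu', fun j d hdM hdn x => ?_⟩, fun x => ?_⟩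
  · have hdD : d ∣ Nat.gcd M' (n J) := (Nat.dvd_gcd hdM hdn).trans (hJ j)
    have h1 : u' x ≡ H J x [ZMOD d] :=
      ((hu'w x).of_dvd (Int.natCast_dvd_natCast.2 (hdD.trans (Nat.dvd_lcm_right _ _)))).trans
        ((hwH x).of_dvd (Int.natCast_dvd_natCast.2 hdD))
    refine h1.trans ?_
    rcases le_total j J with hjJ | hjJ
    · exact (hHH _ _ hjJ x).of_dvd (Int.natCast_dvd_natCast.2 hdn)
    · exact ((hHH _ _ hjJ x).of_dvd (Int.natCast_dvd_natCast.2 (hdD.trans hDn))).symm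
  · exact ((hu'w x).of_dvd (Int.natCast_dvd_natCast.2 (Nat.dvd_lcm_left _ _))).trans (hwu x)

/-- a projection `h` of `(X, f)` onto an odometer with
`Phi (Per (A, g)) ≤ N ≤ Phi (Per (X, f))` factors through a projection onto an
odometer `(A₁, g₁)` with `Phi (Per (A₁, g₁)) = N`. -/
theorem stmt18 {X : Type*} [TopologicalSpace X] [CompactSpace X] [T2Space X]
    (f : X ≃ₜ X) (n : ℕ → ℕ) (hpos : ∀ i, 0 < n i) (hd : ∀ i, n i ∣ n (i + 1))
    (h : X → OdometerCarrier n hd) (hc : Continuous h) (hs : Function.Surjective h)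
    (he : ∀ x, h (f x) = odometerAdd n hd (h x))
    (N : Ultranat) (hN₁ : Phi (Periods (odometerAdd n hd)) ≤ N)
    (hN₂ : N ≤ Phi (Periods (⇑f))) :
    ∃ (n₁ : ℕ → ℕ) (hd₁ : ∀ i, n₁ i ∣ n₁ (i + 1)),
      (∀ i, 0 < n₁ i) ∧
      Phi (Periods (odometerAdd n₁ hd₁)) = N ∧
      ∃ (h₁ : X → OdometerCarrier n₁ hd₁)
        (ψ : OdometerCarrier n₁ hd₁ → OdometerCarrier n hd),
        Continuous h₁ ∧ Function.Surjective h₁ ∧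
        (∀ x, h₁ (f x) = odometerAdd n₁ hd₁ (h₁ x)) ∧
        Continuous ψ ∧ (∀ a, ψ (odometerAdd n₁ hd₁ a) = odometerAdd n hd (ψ a)) ∧
        h = ψ ∘ h₁ := by
  have hX : Nonempty X := ⟨(hs ⟨fun _ => 0, fun i => map_zero _⟩).choose⟩
  set M := scale N
  have hMd : ∀ i, M i ∣ M (i + 1) := fun i => scale_dvd N i.le_succ
  have hMpos : ∀ i, 0 < M i := fun i => (scale_mem N i).1
  have hnM : ∀ j, n j ∣ M (n j) := fun j => dvd_scale
    ⟨hpos j, fun p k hk => (le_Phi (mem_Periods_odometer (hd := hd) hpos j) p hk).trans (hN₁ p)⟩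
    le_rfl
  let H : ℕ → X → ℤ := fun j x => ((h x).1 j).cast
  have hH : ∀ j, IsClock f (n j) (H j) := fun j =>
    ⟨(isClock_coord j).1.comp hc, fun x => by
      have := (isClock_coord j).2 (h x)
      rwa [← he] at this⟩
  have hHH : ∀ i j, i ≤ j → ∀ x, H j x ≡ H i x [ZMOD n i] := fun i j hij x => by
    rw [← ZMod.intCast_eq_intCast_iff]
    have := castHom_coord (h x) hij
    rw [ZMod.castHom_apply] at this
    simp [H, this]
  have hclock : ∀ i, ∃ v, IsClock f (M i) v := fun i =>
    exists_isClock_of_bounded hN₂ (scale_mem N i)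
  have hone : Adapted f n H 1 (fun _ => 0) := ⟨isClock_one, fun j d h1 _ x => by
    rw [Nat.dvd_one.1 h1]
    simpa using Int.modEq_one⟩
  obtain ⟨u₀, hu₀, -⟩ := exists_step hd hH hHH (hMpos 0) (one_dvd _) (hclock 0) hone
  choose next hnext hnextu using fun (i : ℕ) (u : {u // Adapted f n H (M i) u}) =>
    exists_step hd hH hHH (hMpos (i + 1)) (hMd i) (hclock (i + 1)) u.2
  let U : ∀ i, {u // Adapted f n H (M i) u} := fun i =>
    Nat.rec ⟨u₀, hu₀⟩ (fun i u => ⟨next i u, hnext i u⟩) i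
  have hU : ∀ i x, (U (i + 1)).1 x ≡ (U i).1 x [ZMOD M i] := fun i => hnextu i (U i)
  let h₁ : X → OdometerCarrier M hMd := fun x =>
    ⟨fun i => ((U i).1 x : ZMod (M i)), fun i => by
      rw [map_intCast]
      exact (ZMod.intCast_eq_intCast_iff _ _ _).2 (hU i x)⟩
  let ψ : OdometerCarrier M hMd → OdometerCarrier n hd := fun a =>
    ⟨fun j => ZMod.castHom (hnM j) (ZMod (n j)) (a.1 (n j)), fun j => by
      have hle : n j ≤ n (j + 1) := Nat.le_of_dvd (hpos _) (hd j)
      beta_reduce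
      rw [← castHom_coord a hle]
      exact RingHom.congr_fun (Subsingleton.elim
        ((ZMod.castHom (hd j) (ZMod (n j))).comp (ZMod.castHom (hnM (j + 1)) _))
        ((ZMod.castHom (hnM j) (ZMod (n j))).comp (ZMod.castHom (dvd_of_le hMd hle) _))) _⟩
  have hc₁ : Continuous h₁ := Continuous.subtype_mk (continuous_pi fun i =>
    (continuous_of_discreteTopology (f := fun z : ℤ => (z : ZMod (M i)))).comp (U i).2.1.1) _
  have he₁ : ∀ x, h₁ (f x) = odometerAdd M hMd (h₁ x) := fun x =>
    Subtype.ext (funext fun i => by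
      have := (ZMod.intCast_eq_intCast_iff _ _ _).2 ((U i).2.1.2 x)
      simpa [h₁, odometerAdd] using this)
  refine ⟨M, hMd, hMpos, Phi_odometer_scale N, h₁, ψ, hc₁,
    surjective_of_equivariant hMpos hc₁ he₁, he₁, ?_, fun a => ?_, ?_⟩
  · exact Continuous.subtype_mk (continuous_pi fun j =>
      (continuous_of_discreteTopology (f := ZMod.castHom (hnM j) (ZMod (n j)))).comp
        ((continuous_apply (n j)).comp continuous_subtype_val)) _
  · exact Subtype.ext (funext fun j => by
      simp only [ψ, odometerAdd, map_add, map_one])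
  · funext x
    refine Subtype.ext (funext fun j => ?_)
    have := (ZMod.intCast_eq_intCast_iff _ _ _).2 ((U (n j)).2.2 j (n j) (hnM j) dvd_rfl x)
    simp only [Function.comp, ψ, h₁, map_intCast, this, H, ZMod.intCast_cast, ZMod.cast_id', id]
end
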